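/- Let m ≥ 2, d ≥ 1 be integers and W a d×d complex matrix. Let 𝒪_{m−1} be the (m−1)d × (m−1)d complex matrix which, as an (m−1)×(m−1) block matrix with d×d blocks, has diagonal blocks 2I, blocks −I − iW directly above the diagonal, blocks −I + iW directly below the diagonal, and zero blocks elsewhere. Then det 𝒪_{m−1} = det( Σ_{ℓ=0}^{⌊(m−1)/2⌋} C(m, 2ℓ+1) (−1)^ℓ W^{2ℓ} ), where C(m,k) is the binomial coefficient. -/

import Mathlib

open Complex

/-- The `(m−1)d × (m−1)d` block-tridiagonal matrix `𝒪_{m−1}` with diagonal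
blocks `2I`, blocks `−I − iW` directly above the diagonal and `−I + iW`
directly below the diagonal. -/
noncomputable def calO (m d : ℕ) (W : Matrix (Fin d) (Fin d) ℂ) :
    Matrix (Fin (m - 1) × Fin d) (Fin (m - 1) × Fin d) ℂ :=
  fun p q =>
    if p.1 = q.1 then (if p.2 = q.2 then 2 else 0)
    else if (p.1 : ℕ) + 1 = (q.1 : ℕ) then
      -(if p.2 = q.2 then 1 else 0) - Complex.I * W p.2 q.2
    else if (q.1 : ℕ) + 1 = (p.1 : ℕ) then
      -(if p.2 = q.2 then 1 else 0) + Complex.I * W p.2 q.2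
    else 0

/-- scalar tridiagonal matrix -/
def triM {R : Type*} [CommRing R] (a : R) (n : ℕ) : Matrix (Fin n) (Fin n) R :=
  fun i j => if i = j then 2 else if (i : ℕ) + 1 = (j : ℕ) then -1 - a
    else if (j : ℕ) + 1 = (i : ℕ) then -1 + a else 0

theorem triM_sub {R : Type*} [CommRing R] (a : R) (n : ℕ) :
    (triM a (n+1)).submatrix Fin.succ Fin.succ = triM a n := by
  ext i j
  simp [triM]

theorem triM_det {R : Type*} [CommRing R] (a : R) (n : ℕ) :
    (triM a (n+2)).det = 2 * (triM a (n+1)).det - (1 - a^2) * (triM a n).det := by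
  rw [Matrix.det_succ_row_zero, Fin.sum_univ_succ, Fin.sum_univ_succ, Finset.sum_eq_zero]
  · have h1 : (triM a (n+2)).submatrix Fin.succ (Fin.succAbove 0) = triM a (n+1) := by
      rw [← triM_sub a (n+1)]; rfl
    have h2 : ((triM a (n+2)).submatrix Fin.succ (Fin.succAbove (Fin.succ 0))).det
        = (-1 + a) * (triM a n).det := by
      rw [Matrix.det_succ_column_zero, Fin.sum_univ_succ, Finset.sum_eq_zero]
      · have h3 : ((triM a (n+2)).submatrix Fin.succ (Fin.succAbove (Fin.succ 0))).submatrix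
            (Fin.succAbove 0) Fin.succ = triM a n := by
          rw [← triM_sub a n, ← triM_sub a (n+1)]
          ext i j
          simp [Fin.succAbove, Fin.lt_def]
        rw [h3]
        simp [triM, Fin.succAbove, Fin.ext_iff]
      · intro i _
        simp [triM, Fin.succAbove, Fin.ext_iff]
    rw [h1, h2]
    simp [triM, Fin.ext_iff]
    ring
  · intro i _
    simp [triM, Fin.ext_iff]

/-- binomial sum -/
def bS {R : Type*} [CommRing R] (c : R) (m N : ℕ) : R :=
  ∑ l ∈ Finset.range N, (m.choose (2 * l + 1) : R) * c ^ l

theorem bS_rec {R : Type*} [CommRing R] (c : R) (m N : ℕ) :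
    bS c (m+2) (N+1) = 2 * bS c (m+1) (N+1) - bS c m (N+1) + c * bS c m N := by
  have h : ∀ l, ((m+2).choose (2 * (l+1) + 1) : R) =
      2 * (m+1).choose (2 * (l+1) + 1) - m.choose (2 * (l+1) + 1) + m.choose (2 * l + 1) := by
    intro l
    rw [show 2 * (l+1) + 1 = 2*l+1+1+1 by ring]
    simp only [Nat.choose_succ_succ', Nat.cast_add]
    ring
  simp only [bS, Finset.sum_range_succ' _ N, h]
  simp only [mul_add, Finset.mul_sum, add_mul, sub_mul, Finset.sum_add_distrib, Finset.sum_sub_distrib]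
  have e : ∀ l, c * ((m.choose (2 * l + 1) : R) * c ^ l) = (m.choose (2 * l + 1) : R) * c ^ (l+1) :=
    fun l => by ring
  simp only [e, mul_assoc]
  simp
  ring

theorem bS_succ {R : Type*} [CommRing R] (c : R) (m N : ℕ) (h : m ≤ 2 * N) :
    bS c m (N+1) = bS c m N := by
  rw [bS, Finset.sum_range_succ, Nat.choose_eq_zero_of_lt (by omega)]
  simp [bS]

theorem triM_eq {R : Type*} [CommRing R] (a : R) (n : ℕ) :
    ∀ N, n + 1 ≤ 2 * N → (triM a n).det = bS (a^2) (n+1) N := by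
  induction n using Nat.twoStepInduction with
  | zero =>
    intro N hN
    obtain ⟨k, rfl⟩ : ∃ k, N = k + 1 := ⟨N - 1, by omega⟩
    rw [bS, Finset.sum_range_succ', Finset.sum_eq_zero]
    · simp
    · intro l _
      rw [Nat.choose_eq_zero_of_lt (by omega)]; simp
  | one =>
    intro N hN
    obtain ⟨k, rfl⟩ : ∃ k, N = k + 1 := ⟨N - 1, by omega⟩
    rw [bS, Finset.sum_range_succ', Finset.sum_eq_zero]
    · simp [triM]
    · intro l _
      rw [Nat.choose_eq_zero_of_lt (by omega)]; simp
  | more n ih1 ih2 =>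
    intro N hN
    obtain ⟨k, rfl⟩ : ∃ k, N = k + 1 := ⟨N - 1, by omega⟩
    rw [triM_det, ih2 (k+1) (by omega), ih1 k (by omega), show n + 2 + 1 = (n+1) + 2 by ring, bS_rec _ (n+1) k, bS_succ _ (n+1) k (by omega)]
    ring

/-- **Proposition B.1.** The determinant of the block-tridiagonal matrix
`𝒪_{m−1}` equals the determinant of the `d×d` matrix
`Σ_{ℓ=0}^{⌊(m−1)/2⌋} C(m, 2ℓ+1) (−1)^ℓ W^{2ℓ}`. -/
theorem det_calO_eq_det_poly (m d : ℕ) (hm : 2 ≤ m) (hd : 1 ≤ d)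
    (W : Matrix (Fin d) (Fin d) ℂ) :
    (calO m d W).det =
      (∑ ℓ ∈ Finset.range ((m - 1) / 2 + 1),
        ((m.choose (2 * ℓ + 1) : ℂ) * (-1 : ℂ) ^ ℓ) • W ^ (2 * ℓ)).det := by
  have key := Matrix.det_det (triM (Polynomial.C Complex.I * Polynomial.X : Polynomial ℂ) (m-1))
    (Polynomial.aeval W : Polynomial ℂ →ₐ[ℂ] Matrix (Fin d) (Fin d) ℂ).toRingHom
  have hL : calO m d W = Matrix.comp _ _ _ _ _
      ((triM (Polynomial.C Complex.I * Polynomial.X : Polynomial ℂ) (m-1)).map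
      (Polynomial.aeval W : Polynomial ℂ →ₐ[ℂ] Matrix (Fin d) (Fin d) ℂ).toRingHom) := by
    ext ⟨i, k⟩ ⟨j, l⟩
    simp only [calO, triM, Matrix.comp_apply, Matrix.map_apply]
    have h2 : (Polynomial.aeval W) (2 : Polynomial ℂ) = 2 := map_ofNat _ 2
    clear key
    split_ifs <;> simp_all [Matrix.one_apply, Matrix.ofNat_apply, ← Polynomial.smul_eq_C_mul]
  rw [hL]
  refine key.symm.trans ?_
  congr 1
  rw [triM_eq _ (m-1) ((m-1)/2+1) (by omega), bS, show m - 1 + 1 = m by omega, map_sum]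
  refine Finset.sum_congr rfl fun l _ => ?_
  have : ((m.choose (2*l+1) : Polynomial ℂ)) * ((Polynomial.C Complex.I * Polynomial.X)^2)^l
     = ((m.choose (2 * l + 1) : ℂ) * (-1 : ℂ) ^ l) • Polynomial.X ^ (2*l) := by
    rw [mul_pow, ← map_pow, Complex.I_sq, mul_pow, ← map_pow, ← pow_mul,
      Polynomial.smul_eq_C_mul, map_mul, map_natCast, mul_assoc]
  rw [this]
  simp
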